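/- Let Ω ⊂ ℝ^N be a bounded open set with C² boundary. For ε ∈ (0,1) and β ∈ (0,1), define ψ_β : ℝ^N → ℝ by ψ_β(x) = (ε + d(x))^β if x ∈ Ω̄ and ψ_β(x) = 0 otherwise. Then there exist δ̄ ∈ (0, δ₀), β₀ ∈ (0, min{1, 2σ}) and a constant c* > 0, depending only on Ω, N and σ, such that for every β ∈ (0, β₀], every ε ∈ (0, δ̄) and every x in the closure of Ω_δ̄ = {x ∈ Ω : d(x) < δ̄}, one has −I_ε[ψ_β](x) ≥ c* (ε + d(x))^{β − 2σ}. -/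

import Mathlib

open MeasureTheory Metric Set Filter Classical

noncomputable section

/-- The zero-order kernel `K_ε(z) = 1/(ε^{N+2σ} + |z|^{N+2σ})`. -/
def Kker (N : ℕ) (σ ε : ℝ) (z : EuclideanSpace ℝ (Fin N)) : ℝ :=
  1 / (ε ^ ((N : ℝ) + 2 * σ) + ‖z‖ ^ ((N : ℝ) + 2 * σ))

/-- The zero-order nonlocal operator `I_ε[u](x) = ∫ (u(x+z) - u(x)) K_ε(z) dz`. -/
def Iop (N : ℕ) (σ ε : ℝ) (u : EuclideanSpace ℝ (Fin N) → ℝ)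
    (x : EuclideanSpace ℝ (Fin N)) : ℝ :=
  ∫ z, (u (x + z) - u x) * Kker N σ ε z

open Classical in
/-- The signed distance to the boundary of `Ω`. -/
def sdist (N : ℕ) (Ω : Set (EuclideanSpace ℝ (Fin N))) (x : EuclideanSpace ℝ (Fin N)) : ℝ :=
  if x ∈ closure Ω then Metric.infDist x (frontier Ω) else -Metric.infDist x (frontier Ω)

/-- `Ω` has `C²` boundary with parameter `δ₀`: the boundary is nonempty and the signed
distance is `C²` on the strip `{|d| < δ₀}`. -/
def HasC2Boundary (N : ℕ) (Ω : Set (EuclideanSpace ℝ (Fin N))) (δ₀ : ℝ) : Prop :=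
  (frontier Ω).Nonempty ∧ 0 < δ₀ ∧
    ContDiffOn ℝ 2 (sdist N Ω) {x | |sdist N Ω x| < δ₀}

/-- A modulus of continuity: nonnegative, nondecreasing on `[0,∞)`, vanishing and
continuous at `0`. -/
def IsModulus (m : ℝ → ℝ) : Prop :=
  (∀ t, 0 ≤ m t) ∧ MonotoneOn m (Set.Ici (0 : ℝ)) ∧ m 0 = 0 ∧ ContinuousAt m 0

/-- A (pointwise) solution of the Dirichlet problem `-I_ε[u] = f` in `Ω`, `u = 0` in `Ωᶜ`:
a bounded measurable function, continuous in `Ω`, vanishing outside `Ω`, solving the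
equation pointwise in `Ω`. -/
def IsSolution (N : ℕ) (σ : ℝ) (Ω : Set (EuclideanSpace ℝ (Fin N)))
    (f : EuclideanSpace ℝ (Fin N) → ℝ) (ε : ℝ)
    (u : EuclideanSpace ℝ (Fin N) → ℝ) : Prop :=
  Measurable u ∧ (∃ C, ∀ x, |u x| ≤ C) ∧ ContinuousOn u Ω ∧
    (∀ x, x ∉ Ω → u x = 0) ∧ ∀ x ∈ Ω, -Iop N σ ε u x = f x

/-!
Rescale by `ρ = ε + d(x)`, so that `I_ε[ψ_β](x)` becomes `ρ ^ (-2σ)` times the integral of the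
increments of `ψ_β` against `K_{ε/ρ}`. The boundary is at distance at most `ρ` from `x`, so an
exterior corkscrew ball of radius comparable to `ρ` contributes at most `-c ρ ^ β` to that integral,
because `ψ_β` vanishes there, and `c` does not depend on `β`. The positive part of the integral is
only `O(β) ρ ^ β`: far from `x` because `(1 + t) ^ β - 1 ≤ (β / σ) t ^ σ`, and near `x` because the
distance to the boundary is semiconcave while its first-order term integrates to zero by oddness.
For small `β` the exterior ball wins.
-/

open scoped Topology

section Topology

lemma nontrivial_of_frontier_nonempty {X : Type*} [TopologicalSpace X] {s : Set X}
    (hs : (frontier s).Nonempty) : Nontrivial X := by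
  rw [← not_subsingleton_iff_nontrivial]
  intro _
  exact hs.ne_empty (isClopen_discrete s).frontier_eq

lemma subset_interior_of_disjoint_frontier {X : Type*} [TopologicalSpace X] {s t : Set X}
    (hs : IsPreconnected s) (hst : Disjoint s (frontier t)) (hne : (s ∩ closure t).Nonempty) :
    s ⊆ interior t := by
  have mem_interior {x : X} (hx : x ∈ s) (hxt : x ∈ closure t) : x ∈ interior t := by
    by_contra hxi
    exact disjoint_left.1 hst hx ⟨hxt, hxi⟩
  refine hs.subset_left_of_subset_union isOpen_interior isClosed_closure.isOpen_compl
    (disjoint_compl_right.mono_left (interior_subset.trans subset_closure)) (fun x hx ↦ ?_)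
    (hne.imp fun x hx ↦ ⟨hx.1, mem_interior hx.1 hx.2⟩)
  exact or_iff_not_imp_right.2 fun h ↦ mem_interior hx (not_not.1 h)

end Topology

section Distance

lemma ball_infDist_frontier_subset_interior {E : Type*} [SeminormedAddCommGroup E]
    [NormedSpace ℝ E] {s : Set E} {x : E} (hx : x ∈ closure s) :
    ball x (infDist x (frontier s)) ⊆ interior s := by
  rcases (infDist_nonneg (x := x) (s := frontier s)).eq_or_lt with h | h
  · simp [← h]
  · exact subset_interior_of_disjoint_frontier (convex_ball x _).isPreconnected
      disjoint_ball_infDist ⟨x, mem_ball_self h, hx⟩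

lemma disjoint_ball_infDist_frontier {E : Type*} [SeminormedAddCommGroup E] [NormedSpace ℝ E]
    {s : Set E} {x : E} (hx : x ∉ closure s) : Disjoint (ball x (infDist x (frontier s))) s := by
  rw [disjoint_iff_inter_eq_empty, ← not_nonempty_iff_eq_empty]
  rintro ⟨y, hy, hys⟩
  have hsub : ball x (infDist x (frontier s)) ⊆ interior s :=
    subset_interior_of_disjoint_frontier (convex_ball x _).isPreconnected disjoint_ball_infDist
      ⟨y, hy, subset_closure hys⟩
  exact hx (subset_closure (interior_subset (hsub (mem_ball_self (pos_of_mem_ball hy)))))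

lemma norm_add_le_of_ne_zero {E : Type*} [NormedAddCommGroup E] [InnerProductSpace ℝ E] {v : E}
    (hv : v ≠ 0) (z : E) :
    ‖v + z‖ ≤ ‖v‖ + inner ℝ (‖v‖⁻¹ • v) z + ‖z‖ ^ 2 / (2 * ‖v‖) := by
  have hv0 : 0 < ‖v‖ := norm_pos_iff.2 hv
  refine le_of_mul_le_mul_left ?_ (mul_pos two_pos hv0)
  calc 2 * ‖v‖ * ‖v + z‖ ≤ ‖v‖ ^ 2 + ‖v + z‖ ^ 2 := two_mul_le_add_sq _ _
    _ = 2 * ‖v‖ ^ 2 + 2 * inner ℝ v z + ‖z‖ ^ 2 := by rw [norm_add_sq_real]; ring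
    _ = 2 * ‖v‖ * (‖v‖ + inner ℝ (‖v‖⁻¹ • v) z + ‖z‖ ^ 2 / (2 * ‖v‖)) := by
      rw [real_inner_smul_left]
      field_simp

-- The distance to `s` lies below the distance to a nearest point, with equality at `x`.
lemma exists_infDist_add_le_of_pos {E : Type*} [NormedAddCommGroup E] [InnerProductSpace ℝ E]
    [ProperSpace E] {s : Set E} (hs : IsClosed s) {x : E} (hx : 0 < infDist x s) :
    ∃ e : E, ∀ z, infDist (x + z) s ≤ infDist x s + inner ℝ e z + ‖z‖ ^ 2 / (2 * infDist x s) := by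
  have hne : s.Nonempty := nonempty_iff_ne_empty.2 fun h ↦ by simp [h] at hx
  obtain ⟨y, hy, hxy⟩ := hs.exists_infDist_eq_dist hne x
  rw [dist_eq_norm] at hxy
  refine ⟨‖x - y‖⁻¹ • (x - y), fun z ↦ ?_⟩
  calc infDist (x + z) s ≤ dist (x + z) y := infDist_le_dist_of_mem hy
    _ = ‖x - y + z‖ := by rw [dist_eq_norm, add_sub_right_comm]
    _ ≤ infDist x s + inner ℝ (‖x - y‖⁻¹ • (x - y)) z + ‖z‖ ^ 2 / (2 * infDist x s) := by
      rw [hxy] at hx ⊢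
      exact norm_add_le_of_ne_zero (norm_pos_iff.1 hx) z

end Distance

section SignedDistance

variable {N : ℕ} {Ω : Set (EuclideanSpace ℝ (Fin N))} {x y : EuclideanSpace ℝ (Fin N)}

lemma sdist_of_mem_closure (hx : x ∈ closure Ω) : sdist N Ω x = infDist x (frontier Ω) :=
  if_pos hx

lemma sdist_of_notMem_closure (hx : x ∉ closure Ω) : sdist N Ω x = -infDist x (frontier Ω) :=
  if_neg hx

lemma sdist_nonneg (hx : x ∈ closure Ω) : 0 ≤ sdist N Ω x :=
  sdist_of_mem_closure hx ▸ infDist_nonneg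

lemma sdist_of_mem_frontier (hx : x ∈ frontier Ω) : sdist N Ω x = 0 := by
  rw [sdist_of_mem_closure (frontier_subset_closure hx), infDist_zero_of_mem hx]

lemma abs_sdist : |sdist N Ω x| = infDist x (frontier Ω) := by
  by_cases hx : x ∈ closure Ω
  · rw [sdist_of_mem_closure hx, abs_of_nonneg infDist_nonneg]
  · rw [sdist_of_notMem_closure hx, abs_neg, abs_of_nonneg infDist_nonneg]

lemma measurable_sdist : Measurable (sdist N Ω) :=
  Measurable.ite isClosed_closure.measurableSet measurable_infDist measurable_infDist.neg

lemma disjoint_ball_neg_sdist (hx : sdist N Ω x < 0) : Disjoint (ball x (-sdist N Ω x)) Ω := by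
  have hxc : x ∉ closure Ω := fun h ↦ (sdist_nonneg h).not_gt hx
  rw [sdist_of_notMem_closure hxc, neg_neg]
  exact disjoint_ball_infDist_frontier hxc

lemma mem_closure_and_sdist_le_of_mem_closure {δ : ℝ}
    (hx : x ∈ closure {y | y ∈ Ω ∧ sdist N Ω y < δ}) : x ∈ closure Ω ∧ sdist N Ω x ≤ δ := by
  have hxΩ : x ∈ closure Ω := closure_mono (fun y hy ↦ hy.1) hx
  refine ⟨hxΩ, sdist_of_mem_closure hxΩ ▸ ?_⟩
  refine closure_minimal (fun y hy ↦ ?_)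
    (isClosed_le (continuous_infDist_pt (frontier Ω)) continuous_const) hx
  exact (sdist_of_mem_closure (subset_closure hy.1) ▸ hy.2).le

-- Near `y` there are `a ∈ Ω` and a nearest boundary point `b`, with `d a - d b = |a - b| > 0`.
lemma one_le_nnnorm_of_hasStrictFDerivAt_sdist (hΩ : IsOpen Ω) (hy : y ∈ frontier Ω)
    {L : EuclideanSpace ℝ (Fin N) →L[ℝ] ℝ} (hL : HasStrictFDerivAt (sdist N Ω) L y) :
    1 ≤ ‖L‖₊ := by
  by_contra! hL1
  obtain ⟨K, hLK, hK⟩ := exists_between hL1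
  obtain ⟨V, hV, hlip⟩ := hL.exists_lipschitzOnWith_of_nnnorm_lt K hLK
  obtain ⟨r, hr, hrV⟩ := Metric.mem_nhds_iff.1 hV
  obtain ⟨a, haΩ, hya⟩ :=
    Metric.mem_closure_iff.1 (frontier_subset_closure hy) (r / 2) (half_pos hr)
  obtain ⟨b, hb, hab⟩ := isClosed_frontier.exists_infDist_eq_dist ⟨y, hy⟩ a
  have hba : dist b a ≤ dist y a := by
    rw [dist_comm b, dist_comm y, ← hab]
    exact infDist_le_dist_of_mem hy
  have haV : a ∈ V := hrV (by rw [mem_ball']; linarith)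
  have hbV : b ∈ V := hrV (by rw [mem_ball]; linarith [dist_triangle_right b y a])
  have hne : a ≠ b := by
    rintro rfl
    exact (hΩ.frontier_eq ▸ hb).2 haΩ
  have hd : dist (sdist N Ω a) (sdist N Ω b) = dist a b := by
    rw [sdist_of_mem_frontier hb, Real.dist_0_eq_abs, abs_sdist, hab]
  have hle : dist a b ≤ K * dist a b := hd ▸ hlip.dist_le_mul a haV b hbV
  exact hle.not_gt (mul_lt_of_lt_one_left (dist_pos.2 hne) hK)

lemma HasC2Boundary.hasStrictFDerivAt_sdist {δ₀ : ℝ} (hΩ : HasC2Boundary N Ω δ₀)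
    (hy : y ∈ frontier Ω) :
    HasStrictFDerivAt (sdist N Ω) (fderiv ℝ (sdist N Ω) y) y := by
  obtain ⟨-, hδ₀, hC2⟩ := hΩ
  have hopen : IsOpen {x | |sdist N Ω x| < δ₀} := by
    simpa only [abs_sdist] using isOpen_lt (continuous_infDist_pt (frontier Ω)) continuous_const
  have hmem : y ∈ {x | |sdist N Ω x| < δ₀} := by simpa [sdist_of_mem_frontier hy] using hδ₀
  exact (hC2.contDiffAt (hopen.mem_nhds hmem)).hasStrictFDerivAt (by norm_num)

end SignedDistance

section ExteriorCorkscrew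

/-- The uniform exterior corkscrew condition with aperture `θ`: at every sufficiently small scale
`t`, uniformly in the boundary point `y`, some ball of radius `θ * t` with centre within `t` of `y`
does not meet `s`. Through it the boundary regularity enters the barrier estimate. -/
def HasExteriorCorkscrew {X : Type*} [PseudoMetricSpace X] (s : Set X) (θ : ℝ) : Prop :=
  ∀ᶠ t in 𝓝[>] (0 : ℝ), ∀ y ∈ frontier s, ∃ w ∈ closedBall y t, Disjoint (ball w (θ * t)) s

lemma exists_direction_eventually_le_sub {E : Type*} [NormedAddCommGroup E] [NormedSpace ℝ E]
    {f : E → ℝ} {L : E →L[ℝ] ℝ} {x : E} (hf : HasStrictFDerivAt f L x) {θ : ℝ} (hθ : θ < ‖L‖) :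
    ∃ n : E, ‖n‖ ≤ 1 ∧ ∀ᶠ p : ℝ × E in 𝓝[>] 0 ×ˢ 𝓝 x, f (p.2 + p.1 • n) ≤ f p.2 - θ * p.1 := by
  obtain ⟨n, hn, hLn⟩ : ∃ n : E, ‖n‖ ≤ 1 ∧ L n < -θ := by
    obtain ⟨m, hm, hLm⟩ := L.exists_lt_apply_of_lt_opNorm hθ
    rcases lt_abs.1 hLm with h | h
    · exact ⟨-m, by simpa using hm.le, by simpa using h⟩
    · exact ⟨m, hm.le, by linarith⟩
  refine ⟨n, hn, ?_⟩
  have htendsto : Tendsto (fun p : ℝ × E ↦ (p.2 + p.1 • n, p.2)) (𝓝[>] 0 ×ˢ 𝓝 x) (𝓝 (x, x)) := by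
    have hcont : Continuous fun p : ℝ × E ↦ (p.2 + p.1 • n, p.2) := by fun_prop
    refine (hcont.tendsto' (0, x) (x, x) (by simp)).mono_left ?_
    rw [nhds_prod_eq]
    exact prod_mono_left _ nhdsWithin_le_nhds
  have hpos : ∀ᶠ p : ℝ × E in 𝓝[>] 0 ×ˢ 𝓝 x, 0 < p.1 :=
    tendsto_fst.eventually self_mem_nhdsWithin
  filter_upwards [htendsto.eventually (hf.isLittleO.def (show 0 < -θ - L n by linarith)), hpos]
    with ⟨t, y⟩ hty (ht : 0 < t)
  simp only [add_sub_cancel_left, map_smul, smul_eq_mul, Real.norm_eq_abs, norm_smul,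
    abs_of_pos ht] at hty
  have hslope : (-θ - L n) * (t * ‖n‖) ≤ (-θ - L n) * t :=
    mul_le_mul_of_nonneg_left (mul_le_of_le_one_right ht.le hn) (by linarith)
  linarith [le_of_abs_le hty]

-- Moving from `y` against the gradient of `d` makes `d` negative at a linear rate.
lemma hasExteriorCorkscrew_of_hasStrictFDerivAt_sdist {N : ℕ}
    {Ω : Set (EuclideanSpace ℝ (Fin N))} (hΩo : IsOpen Ω) (hΩb : Bornology.IsBounded Ω)
    (hΩ : ∀ y ∈ frontier Ω, ∃ L : EuclideanSpace ℝ (Fin N) →L[ℝ] ℝ,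
      HasStrictFDerivAt (sdist N Ω) L y) {θ : ℝ}
    (hθ : θ ∈ Ioo (0 : ℝ) 1) : HasExteriorCorkscrew Ω θ := by
  have hcompact : IsCompact (frontier Ω) :=
    isCompact_of_isClosed_isBounded isClosed_frontier (hΩb.closure.subset frontier_subset_closure)
  have hlocal : ∀ y₀ ∈ frontier Ω, ∀ᶠ p : ℝ × EuclideanSpace ℝ (Fin N) in 𝓝[>] 0 ×ˢ 𝓝 y₀,
      p.2 ∈ frontier Ω → ∃ w ∈ closedBall p.2 p.1, Disjoint (ball w (θ * p.1)) Ω := by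
    intro y₀ hy₀
    obtain ⟨L, hL⟩ := hΩ y₀ hy₀
    obtain ⟨n, hn, hdescent⟩ := exists_direction_eventually_le_sub hL
      (hθ.2.trans_le (one_le_nnnorm_of_hasStrictFDerivAt_sdist hΩo hy₀ hL))
    have hpos : ∀ᶠ p : ℝ × EuclideanSpace ℝ (Fin N) in 𝓝[>] 0 ×ˢ 𝓝 y₀, 0 < p.1 :=
      tendsto_fst.eventually self_mem_nhdsWithin
    filter_upwards [hdescent, hpos] with ⟨t, y⟩ hw (ht : 0 < t) (hy : y ∈ frontier Ω)
    simp only [sdist_of_mem_frontier hy, zero_sub] at hw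
    have hθt : 0 < θ * t := mul_pos hθ.1 ht
    refine ⟨y + t • n, ?_, (disjoint_ball_neg_sdist (by linarith)).mono_left
      (ball_subset_ball (by linarith))⟩
    rw [mem_closedBall, dist_self_add_left, norm_smul, Real.norm_of_nonneg ht.le]
    exact mul_le_of_le_one_right ht.le hn
  have hglobal : ∀ᶠ p : ℝ × EuclideanSpace ℝ (Fin N) in 𝓝[>] 0 ×ˢ 𝓝ˢ (frontier Ω),
      p.2 ∈ frontier Ω → ∃ w ∈ closedBall p.2 p.1, Disjoint (ball w (θ * p.1)) Ω :=
    hcompact.mem_prod_nhdsSet_of_forall hlocal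
  exact hglobal.curry.mono fun t ht y hy ↦ ht.self_of_nhdsSet y hy hy

lemma HasC2Boundary.hasExteriorCorkscrew {N : ℕ} {Ω : Set (EuclideanSpace ℝ (Fin N))} {δ₀ : ℝ}
    (hΩ : HasC2Boundary N Ω δ₀) (hΩo : IsOpen Ω) (hΩb : Bornology.IsBounded Ω) {θ : ℝ}
    (hθ : θ ∈ Ioo (0 : ℝ) 1) : HasExteriorCorkscrew Ω θ :=
  hasExteriorCorkscrew_of_hasStrictFDerivAt_sdist hΩo hΩb
    (fun _ hy ↦ ⟨_, hΩ.hasStrictFDerivAt_sdist hy⟩) hθ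

lemma exists_mem_closedBall_two_mul_disjoint {X : Type*} [PseudoMetricSpace X] [ProperSpace X]
    {s : Set X} {t R : ℝ} (hs : ∀ y ∈ frontier s, ∃ w ∈ closedBall y t, Disjoint (ball w R) s)
    (hne : (frontier s).Nonempty) {x : X} (hx : infDist x (frontier s) ≤ t) :
    ∃ w ∈ closedBall x (2 * t), Disjoint (ball w R) s := by
  obtain ⟨y, hy, hxy⟩ := isClosed_frontier.exists_infDist_eq_dist hne x
  obtain ⟨w, hw, hdisj⟩ := hs y hy
  refine ⟨w, ?_, hdisj⟩
  rw [mem_closedBall] at hw ⊢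
  linarith [dist_triangle_right w x y]

end ExteriorCorkscrew


section Kernel

variable {N : ℕ} {σ a : ℝ} {s : EuclideanSpace ℝ (Fin N)}

lemma Kker_nonneg (ha : 0 ≤ a) : 0 ≤ Kker N σ a s := by
  unfold Kker
  positivity

lemma Kker_neg : Kker N σ a (-s) = Kker N σ a s := by
  simp only [Kker, norm_neg]

lemma measurable_Kker : Measurable (Kker N σ a) := by
  unfold Kker
  fun_prop

lemma Kker_le_rpow_norm (ha : 0 ≤ a) (hs : 0 < ‖s‖) : Kker N σ a s ≤ ‖s‖ ^ (-(N + 2 * σ)) := by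
  rw [Kker, Real.rpow_neg (norm_nonneg s), ← one_div]
  exact one_div_le_one_div_of_le (by positivity) (le_add_of_nonneg_left (by positivity))

lemma Kker_le_rpow (ha : 0 < a) : Kker N σ a s ≤ a ^ (-(N + 2 * σ)) := by
  rw [Kker, Real.rpow_neg ha.le, ← one_div]
  exact one_div_le_one_div_of_le (by positivity) (le_add_of_nonneg_right (by positivity))

lemma one_div_one_add_rpow_le_Kker (hσ : 0 ≤ σ) (ha : a ∈ Ioc 0 1) {R : ℝ} (hs : ‖s‖ ≤ R) :
    1 / (1 + R ^ (N + 2 * σ)) ≤ Kker N σ a s := by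
  have ha0 : 0 < a := ha.1
  have hap : a ^ (N + 2 * σ) ≤ 1 := Real.rpow_le_one ha.1.le ha.2 (by positivity)
  unfold Kker
  gcongr

lemma Kker_smul {ε ρ : ℝ} (hε : 0 < ε) (hρ : 0 < ρ) :
    Kker N σ ε (ρ • s) = ρ ^ (-(N + 2 * σ)) * Kker N σ (ε / ρ) s := by
  rw [Kker, Kker, norm_smul, Real.norm_of_nonneg hρ.le, Real.mul_rpow hρ.le (norm_nonneg s),
    Real.div_rpow hε.le hρ.le, Real.rpow_neg hρ.le]
  have hρp : 0 < ρ ^ (N + 2 * σ) := by positivity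
  rw [← one_div, div_mul_div_comm, mul_add, mul_div_cancel₀ _ hρp.ne', one_mul]

lemma one_add_rpow_le_two_rpow_mul {p t : ℝ} (hp : 0 ≤ p) (ht : 0 ≤ t) :
    (1 + t) ^ p ≤ 2 ^ p * (1 + t ^ p) := by
  have hmax : max 1 t ^ p ≤ 1 + t ^ p := by
    rcases max_choice 1 t with h | h <;> rw [h]
    · simpa using Real.rpow_nonneg ht p
    · exact le_add_of_nonneg_left zero_le_one
  calc (1 + t) ^ p ≤ (2 * max 1 t) ^ p := by
        gcongr
        linarith [le_max_left 1 t, le_max_right 1 t]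
    _ = 2 ^ p * max 1 t ^ p := Real.mul_rpow zero_le_two (by positivity)
    _ ≤ 2 ^ p * (1 + t ^ p) := by gcongr

lemma integrable_Kker (hσ : 0 < σ) (ha : 0 < a) : Integrable (Kker N σ a) := by
  have hone : Integrable (Kker N σ 1) := by
    have hdecay : Integrable fun s : EuclideanSpace ℝ (Fin N) ↦ (1 + ‖s‖) ^ (-(N + 2 * σ)) :=
      integrable_one_add_norm (by simpa using hσ)
    refine (hdecay.const_mul (2 ^ (N + 2 * σ))).mono' measurable_Kker.aestronglyMeasurable
      (ae_of_all _ fun s ↦ ?_)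
    rw [Real.norm_of_nonneg (Kker_nonneg zero_le_one), Kker, Real.one_rpow,
      Real.rpow_neg (by positivity), ← div_eq_mul_inv, div_le_div_iff₀ (by positivity)
      (by positivity), one_mul]
    exact one_add_rpow_le_two_rpow_mul (by positivity) (norm_nonneg s)
  rw [← integrable_comp_smul_iff volume _ ha.ne']
  simpa only [Kker_smul ha ha, div_self ha.ne'] using hone.const_mul _

lemma integrable_indicator_inner_mul_Kker (hσ : 0 < σ) (ha : 0 < a)
    (e : EuclideanSpace ℝ (Fin N)) (R : ℝ) :
    Integrable ((ball 0 R).indicator fun s ↦ inner ℝ e s * Kker N σ a s) := by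
  rw [integrable_indicator_iff measurableSet_ball]
  have hmeas : Measurable fun s : EuclideanSpace ℝ (Fin N) ↦ inner ℝ e s := by fun_prop
  refine (integrable_Kker hσ ha).integrableOn.bdd_mul (c := ‖e‖ * R) hmeas.aestronglyMeasurable
    ((ae_restrict_iff' measurableSet_ball).2 (ae_of_all _ fun s hs ↦ ?_))
  exact (norm_inner_le_norm e s).trans (by gcongr; exact (mem_ball_zero_iff.1 hs).le)

lemma integral_eq_zero_of_odd {G : Type*} [AddGroup G] [MeasurableSpace G] [MeasurableNeg G]
    {μ : Measure G} [μ.IsNegInvariant] {f : G → ℝ} (hf : f.Odd) : ∫ x, f x ∂μ = 0 := by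
  have h : ∫ x, f (-x) ∂μ = ∫ x, f x ∂μ := integral_neg_eq_self f μ
  simp only [hf _, integral_neg] at h
  linarith

lemma integral_indicator_inner_mul_Kker (e : EuclideanSpace ℝ (Fin N)) (R : ℝ) :
    ∫ s, (ball 0 R).indicator (fun s ↦ inner ℝ e s * Kker N σ a s) s = 0 := by
  refine integral_eq_zero_of_odd fun s ↦ ?_
  simp only [indicator, mem_ball_zero_iff, norm_neg, inner_neg_right, Kker_neg, neg_mul]
  split_ifs <;> simp

lemma mul_volume_ball_le_setIntegral_Kker (hσ : 0 < σ) (ha : a ∈ Ioc 0 1)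
    {R θ : ℝ} (hs : ‖s‖ ≤ R) {A : Set (EuclideanSpace ℝ (Fin N))} (hA : ball s θ ⊆ A) :
    1 / (1 + (R + θ) ^ (N + 2 * σ)) * volume.real (ball (0 : EuclideanSpace ℝ (Fin N)) θ) ≤
      ∫ z in A, Kker N σ a z := by
  have hint : Integrable (Kker N σ a) := integrable_Kker hσ ha.1
  calc 1 / (1 + (R + θ) ^ (N + 2 * σ)) * volume.real (ball (0 : EuclideanSpace ℝ (Fin N)) θ)
      = 1 / (1 + (R + θ) ^ (N + 2 * σ)) * volume.real (ball s θ) := by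
        rw [Measure.addHaar_real_ball_center volume s]
    _ ≤ ∫ z in ball s θ, Kker N σ a z := by
        refine setIntegral_ge_of_const_le_real measurableSet_ball measure_ball_lt_top.ne
          (fun z hz ↦ one_div_one_add_rpow_le_Kker hσ.le ha ?_) hint.integrableOn
        rw [mem_ball_iff_norm'] at hz
        linarith [norm_le_norm_add_norm_sub s z]
    _ ≤ ∫ z in A, Kker N σ a z :=
        setIntegral_mono_set hint.integrableOn (ae_of_all _ fun z ↦ Kker_nonneg ha.1.le)
          (LE.le.eventuallyLE hA)

lemma Iop_eq_rpow_mul_integral {ε ρ : ℝ} (hε : 0 < ε) (hρ : 0 < ρ)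
    (u : EuclideanSpace ℝ (Fin N) → ℝ) (x : EuclideanSpace ℝ (Fin N)) :
    Iop N σ ε u x =
      ρ ^ (-(2 * σ)) * ∫ s, (u (x + ρ • s) - u x) * Kker N σ (ε / ρ) s := by
  have hscale := Measure.integral_comp_smul_of_nonneg volume
    (fun z ↦ (u (x + z) - u x) * Kker N σ ε z) ρ (hR := hρ.le)
  simp only [Kker_smul hε hρ, mul_left_comm _ (ρ ^ (-(N + 2 * σ))), integral_const_mul,
    finrank_euclideanSpace_fin, smul_eq_mul] at hscale
  have hexp : ρ ^ (-(2 * σ)) = ρ ^ N * ρ ^ (-(N + 2 * σ)) := by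
    rw [← Real.rpow_natCast, ← Real.rpow_add hρ]
    ring_nf
  rw [hexp, mul_assoc, hscale, mul_inv_cancel_left₀ (by positivity), Iop]

end Kernel

section Majorant

/-- A radial profile, integrable on `ℝⁿ` when `n + τ < p < n + 2`, that dominates the rescaled
kernel of order `-p` times the increments of the barrier. The powers `2 - p` and `τ - p` come from
the quadratic remainder near `0` and from growth of order `τ` at infinity; `2 ^ p` covers base
points so close to the boundary that the rescaled kernel is bounded. -/
def radialMajorant (p τ t : ℝ) : ℝ :=
  if t < 1 / 2 then t ^ (2 - p) + 2 ^ p else t ^ (τ - p)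

lemma radialMajorant_nonneg {p τ t : ℝ} (ht : 0 ≤ t) : 0 ≤ radialMajorant p τ t := by
  unfold radialMajorant
  split_ifs <;> positivity

lemma integrable_radialMajorant_norm {E : Type*} [NormedAddCommGroup E] [NormedSpace ℝ E]
    [FiniteDimensional ℝ E] [Nontrivial E] [MeasurableSpace E] [BorelSpace E] (μ : Measure E)
    [μ.IsAddHaarMeasure] {p τ : ℝ} (hp : p < Module.finrank ℝ E + 2)
    (hτ : Module.finrank ℝ E + τ < p) : Integrable (fun s ↦ radialMajorant p τ ‖s‖) μ := by
  rw [integrable_fun_norm_addHaar μ (f := radialMajorant p τ)]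
  set n := Module.finrank ℝ E
  have hn : ((n - 1 : ℕ) : ℝ) = n - 1 := Nat.cast_pred Module.finrank_pos
  have pow_mul_rpow {y : ℝ} (hy : 0 < y) (q : ℝ) : y ^ (n - 1) * y ^ q = y ^ (n - 1 + q : ℝ) := by
    rw [← Real.rpow_natCast, hn, ← Real.rpow_add hy]
  rw [← Ioo_union_Ici_eq_Ioi (show (0 : ℝ) < 1 / 2 by norm_num)]
  refine IntegrableOn.union ?_ ?_
  · have hsum : IntegrableOn (fun y : ℝ ↦ y ^ (n - 1 + (2 - p) : ℝ) + y ^ (n - 1) * 2 ^ p)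
        (Ioo 0 (1 / 2)) := by
      refine IntegrableOn.add ?_ ?_
      · rw [intervalIntegral.integrableOn_Ioo_rpow_iff (by norm_num)]
        linarith
      · exact (Continuous.integrableOn_Icc (by fun_prop)).mono_set Ioo_subset_Icc_self
    refine hsum.congr_fun (fun y hy ↦ ?_) measurableSet_Ioo
    simp only [radialMajorant, if_pos hy.2, smul_eq_mul, mul_add, pow_mul_rpow hy.1]
  · rw [integrableOn_Ici_iff_integrableOn_Ioi]
    have htail : IntegrableOn (fun y : ℝ ↦ y ^ (n - 1 + (τ - p) : ℝ)) (Ioi (1 / 2)) :=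
      integrableOn_Ioi_rpow_of_lt (by linarith) (by norm_num)
    refine htail.congr_fun (fun y (hy : 1 / 2 < y) ↦ ?_) measurableSet_Ioi
    simp only [radialMajorant, if_neg hy.not_gt, smul_eq_mul, pow_mul_rpow (one_half_pos.trans hy)]

variable {N : ℕ} {σ τ a : ℝ} {s : EuclideanSpace ℝ (Fin N)}

lemma rpow_norm_mul_Kker_le_rpow (ha : 0 ≤ a) (hs : 0 < ‖s‖) (q : ℝ) :
    ‖s‖ ^ q * Kker N σ a s ≤ ‖s‖ ^ (q - (N + 2 * σ)) := by
  rw [sub_eq_add_neg, Real.rpow_add hs]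
  gcongr
  exact Kker_le_rpow_norm ha hs

lemma rpow_norm_mul_Kker_le_radialMajorant_of_half_le_norm (ha : 0 ≤ a) (hs : 1 / 2 ≤ ‖s‖) :
    ‖s‖ ^ τ * Kker N σ a s ≤ radialMajorant (N + 2 * σ) τ ‖s‖ := by
  rw [radialMajorant, if_neg hs.not_gt]
  exact rpow_norm_mul_Kker_le_rpow ha (one_half_pos.trans_le hs) τ

lemma rpow_norm_mul_Kker_le_radialMajorant_of_half_le (hσ : 0 ≤ σ) (hτ : 0 ≤ τ) (ha : 1 / 2 ≤ a) :
    ‖s‖ ^ τ * Kker N σ a s ≤ radialMajorant (N + 2 * σ) τ ‖s‖ := by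
  have ha0 : 0 < a := one_half_pos.trans_le ha
  rcases lt_or_ge ‖s‖ (1 / 2) with hs | hs
  · have hK : Kker N σ a s ≤ 2 ^ (N + 2 * σ) :=
      calc Kker N σ a s ≤ a ^ (-(N + 2 * σ)) := Kker_le_rpow ha0
        _ ≤ (1 / 2) ^ (-(N + 2 * σ)) :=
          Real.rpow_le_rpow_of_nonpos one_half_pos ha (neg_nonpos.2 (by positivity))
        _ = 2 ^ (N + 2 * σ) := by
          rw [one_div, Real.inv_rpow zero_le_two, Real.rpow_neg zero_le_two, inv_inv]
    rw [radialMajorant, if_pos hs]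
    calc ‖s‖ ^ τ * Kker N σ a s ≤ 1 * 2 ^ (N + 2 * σ) :=
          mul_le_mul (Real.rpow_le_one (norm_nonneg s) (by linarith) hτ) hK
            (Kker_nonneg ha0.le) zero_le_one
      _ ≤ ‖s‖ ^ (2 - (N + 2 * σ)) + 2 ^ (N + 2 * σ) := by
          rw [one_mul]
          exact le_add_of_nonneg_left (by positivity)
  · exact rpow_norm_mul_Kker_le_radialMajorant_of_half_le_norm ha0.le hs

lemma sq_norm_mul_Kker_le_radialMajorant (ha : 0 ≤ a) (hs : ‖s‖ < 1 / 2) :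
    ‖s‖ ^ 2 * Kker N σ a s ≤ radialMajorant (N + 2 * σ) τ ‖s‖ := by
  rcases (norm_nonneg s).eq_or_lt with h0 | h0
  · rw [← h0, zero_pow two_ne_zero, zero_mul]
    exact radialMajorant_nonneg le_rfl
  · rw [radialMajorant, if_pos hs, ← Real.rpow_two]
    exact (rpow_norm_mul_Kker_le_rpow ha h0 2).trans (le_add_of_nonneg_right (by positivity))

end Majorant

section Barrier

-- Subadditivity of `t ↦ t ^ σ`, then Bernoulli's inequality with exponent `β / σ ≤ 1`.
lemma one_add_rpow_sub_one_le {β σ t : ℝ} (hβ : 0 < β) (hβσ : β ≤ σ) (hσ : σ ≤ 1) (ht : 0 ≤ t) :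
    (1 + t) ^ β - 1 ≤ β / σ * t ^ σ := by
  have hσ0 : 0 < σ := hβ.trans_le hβσ
  have hsub : (1 + t) ^ σ ≤ 1 + t ^ σ := by
    simpa using Real.rpow_add_le_add_rpow zero_le_one ht hσ0.le hσ
  have htσ : 0 ≤ t ^ σ := by positivity
  calc (1 + t) ^ β - 1 = ((1 + t) ^ σ) ^ (β / σ) - 1 := by
        rw [← Real.rpow_mul (by positivity), mul_div_cancel₀ _ hσ0.ne']
    _ ≤ (1 + t ^ σ) ^ (β / σ) - 1 := by gcongr
    _ ≤ β / σ * t ^ σ := sub_le_iff_le_add'.2 (rpow_one_add_le_one_add_mul_self (by linarith)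
        (by positivity) ((div_le_one hσ0).2 hβσ))

/-- The barrier `ψ_β(x) = (ε + d(x)) ^ β` on the closure of `Ω`, extended by zero. -/
def barrier (N : ℕ) (Ω : Set (EuclideanSpace ℝ (Fin N))) (ε β : ℝ)
    (x : EuclideanSpace ℝ (Fin N)) : ℝ :=
  if x ∈ closure Ω then (ε + sdist N Ω x) ^ β else 0

variable {N : ℕ} {Ω : Set (EuclideanSpace ℝ (Fin N))} {σ ε β ρ : ℝ}
  {x z s : EuclideanSpace ℝ (Fin N)}

lemma barrier_of_mem_closure (hx : x ∈ closure Ω) :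
    barrier N Ω ε β x = (ε + sdist N Ω x) ^ β :=
  if_pos hx

lemma barrier_of_notMem_closure (hx : x ∉ closure Ω) : barrier N Ω ε β x = 0 :=
  if_neg hx

lemma barrier_nonneg (hε : 0 ≤ ε) : 0 ≤ barrier N Ω ε β x := by
  unfold barrier
  split_ifs with hx
  · exact Real.rpow_nonneg (add_nonneg hε (sdist_nonneg hx)) β
  · exact le_rfl

lemma measurable_barrier : Measurable (barrier N Ω ε β) :=
  Measurable.ite isClosed_closure.measurableSet ((measurable_sdist.const_add ε).pow_const β)
    measurable_const

lemma barrier_le_infDist_rpow (hε : 0 ≤ ε) :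
    barrier N Ω ε β x ≤ (ε + infDist x (frontier Ω)) ^ β := by
  unfold barrier
  split_ifs with hx
  · rw [sdist_of_mem_closure hx]
  · exact Real.rpow_nonneg (add_nonneg hε infDist_nonneg) β

lemma one_add_pos_of_infDist_le (hε : 0 < ε) (hx : x ∈ closure Ω) (hρ : ρ = ε + sdist N Ω x)
    {u : ℝ} (hu : infDist z (frontier Ω) ≤ infDist x (frontier Ω) + ρ * u) : 0 < 1 + u := by
  have hz : 0 ≤ infDist z (frontier Ω) := infDist_nonneg
  rw [← sdist_of_mem_closure hx] at hu
  have hρ0 : 0 < ρ := hρ ▸ add_pos_of_pos_of_nonneg hε (sdist_nonneg hx)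
  exact pos_of_mul_pos_right (show 0 < ρ * (1 + u) by linarith) hρ0.le

lemma barrier_sub_le (hε : 0 < ε) (hβ : 0 ≤ β) (hx : x ∈ closure Ω) (hρ : ρ = ε + sdist N Ω x)
    {u : ℝ} (hu : infDist z (frontier Ω) ≤ infDist x (frontier Ω) + ρ * u) :
    barrier N Ω ε β z - barrier N Ω ε β x ≤ ρ ^ β * ((1 + u) ^ β - 1) := by
  have hu0 : 0 < 1 + u := one_add_pos_of_infDist_le hε hx hρ hu
  have hρ0 : 0 ≤ ρ := hρ ▸ add_nonneg hε.le (sdist_nonneg hx)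
  have hz : barrier N Ω ε β z ≤ ρ ^ β * (1 + u) ^ β :=
    calc barrier N Ω ε β z ≤ (ε + infDist z (frontier Ω)) ^ β := barrier_le_infDist_rpow hε.le
      _ ≤ (ρ * (1 + u)) ^ β := by
        rw [← sdist_of_mem_closure hx] at hu
        have hz0 : 0 ≤ infDist z (frontier Ω) := infDist_nonneg
        gcongr
        linarith
      _ = ρ ^ β * (1 + u) ^ β := Real.mul_rpow hρ0 hu0.le
  rw [barrier_of_mem_closure hx, ← hρ]
  linarith

lemma barrier_add_smul_sub_le (hε : 0 < ε) (hβ : 0 < β) (hβσ : β ≤ σ) (hσ : σ ≤ 1)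
    (hx : x ∈ closure Ω) (hρ : ρ = ε + sdist N Ω x) :
    barrier N Ω ε β (x + ρ • s) - barrier N Ω ε β x ≤ ρ ^ β * (β / σ * ‖s‖ ^ σ) := by
  have hρ0 : 0 ≤ ρ := hρ ▸ add_nonneg hε.le (sdist_nonneg hx)
  have hu : infDist (x + ρ • s) (frontier Ω) ≤ infDist x (frontier Ω) + ρ * ‖s‖ := by
    simpa [norm_smul, abs_of_nonneg hρ0] using
      infDist_le_infDist_add_dist (s := frontier Ω) (x := x + ρ • s) (y := x)
  calc barrier N Ω ε β (x + ρ • s) - barrier N Ω ε β x ≤ ρ ^ β * ((1 + ‖s‖) ^ β - 1) :=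
        barrier_sub_le hε hβ.le hx hρ hu
    _ ≤ ρ ^ β * (β / σ * ‖s‖ ^ σ) := by
        gcongr
        exact one_add_rpow_sub_one_le hβ hβσ hσ (norm_nonneg s)

lemma exists_barrier_add_smul_sub_le (hε : 0 < ε) (hβ : β ∈ Icc 0 1)
    (hx : x ∈ closure Ω) (hρ : ρ = ε + sdist N Ω x) (hρd : ρ ≤ 2 * sdist N Ω x) :
    ∃ e : EuclideanSpace ℝ (Fin N), ∀ s, barrier N Ω ε β (x + ρ • s) - barrier N Ω ε β x ≤
      ρ ^ β * (β * (inner ℝ e s + ‖s‖ ^ 2)) := by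
  have hρ0 : 0 < ρ := hρ ▸ add_pos_of_pos_of_nonneg hε (sdist_nonneg hx)
  rw [sdist_of_mem_closure hx] at hρd
  have hd : 0 < infDist x (frontier Ω) := by linarith
  obtain ⟨e, he⟩ := exists_infDist_add_le_of_pos isClosed_frontier hd
  refine ⟨e, fun s ↦ ?_⟩
  have hu : infDist (x + ρ • s) (frontier Ω) ≤
      infDist x (frontier Ω) + ρ * (inner ℝ e s + ‖s‖ ^ 2) := by
    have hquad : ‖ρ • s‖ ^ 2 / (2 * infDist x (frontier Ω)) ≤ ρ * ‖s‖ ^ 2 := by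
      rw [norm_smul, Real.norm_of_nonneg hρ0.le, div_le_iff₀ (by positivity)]
      calc (ρ * ‖s‖) ^ 2 = ρ * ‖s‖ ^ 2 * ρ := by ring
        _ ≤ ρ * ‖s‖ ^ 2 * (2 * infDist x (frontier Ω)) := by gcongr
    have hs := he (ρ • s)
    rw [real_inner_smul_right] at hs
    linarith
  refine (barrier_sub_le hε hβ.1 hx hρ hu).trans ?_
  have hpos := one_add_pos_of_infDist_le hε hx hρ hu
  gcongr
  exact sub_le_iff_le_add'.2 (rpow_one_add_le_one_add_mul_self (by linarith) hβ.1 hβ.2)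

lemma barrier_increment_mul_Kker_le {a : ℝ} (ha : 0 ≤ a) (hε : 0 < ε) (hβ : 0 < β) (hβσ : β ≤ σ)
    (hσ : σ ≤ 1) (hx : x ∈ closure Ω) (hρ : ρ = ε + sdist N Ω x) :
    (barrier N Ω ε β (x + ρ • s) - barrier N Ω ε β x) * Kker N σ a s ≤
      ρ ^ β * (β / σ * (‖s‖ ^ σ * Kker N σ a s) -
        {s | x + ρ • s ∉ closure Ω}.indicator (Kker N σ a) s) := by
  have hK : 0 ≤ Kker N σ a s := Kker_nonneg ha
  by_cases hs : x + ρ • s ∈ closure Ω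
  · rw [indicator_of_notMem (by simpa using hs), sub_zero, ← mul_assoc (β / σ), ← mul_assoc]
    gcongr
    exact barrier_add_smul_sub_le hε hβ hβσ hσ hx hρ
  · have hρ0 : 0 ≤ ρ := hρ ▸ add_nonneg hε.le (sdist_nonneg hx)
    have hσ0 : 0 < σ := hβ.trans_le hβσ
    rw [indicator_of_mem (by exact hs), barrier_of_notMem_closure hs, barrier_of_mem_closure hx,
      ← hρ, zero_sub, neg_mul, ← mul_neg]
    gcongr
    exact (neg_eq_zero_sub _).trans_le (sub_le_sub_right (by positivity) _)

lemma add_smul_mem_closure (hε : 0 < ε) (hx : x ∈ closure Ω) (hρ : ρ = ε + sdist N Ω x)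
    (hρd : ρ ≤ 2 * sdist N Ω x) (hs : ‖s‖ < 1 / 2) : x + ρ • s ∈ closure Ω := by
  have hρ0 : 0 < ρ := hρ ▸ add_pos_of_pos_of_nonneg hε (sdist_nonneg hx)
  refine subset_closure (interior_subset (ball_infDist_frontier_subset_interior hx ?_))
  rw [← sdist_of_mem_closure hx, mem_ball, dist_self_add_left, norm_smul,
    Real.norm_of_nonneg hρ0.le]
  calc ρ * ‖s‖ < ρ * (1 / 2) := by gcongr
    _ ≤ sdist N Ω x := by linarith

lemma exists_barrier_increment_mul_Kker_le_of_norm_lt_half {a : ℝ} (ha : 0 ≤ a) (hε : 0 < ε)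
    (hβ : 0 < β) (hβσ : β ≤ σ) (hσ : σ ≤ 1) (hx : x ∈ closure Ω)
    (hρ : ρ = ε + sdist N Ω x) (hρd : ρ ≤ 2 * sdist N Ω x) :
    ∃ e : EuclideanSpace ℝ (Fin N), ∀ s, ‖s‖ < 1 / 2 →
      (barrier N Ω ε β (x + ρ • s) - barrier N Ω ε β x) * Kker N σ a s ≤
        ρ ^ β * (β / σ * radialMajorant (N + 2 * σ) σ ‖s‖ + β * (inner ℝ e s * Kker N σ a s)) := by
  have hσ0 : 0 < σ := hβ.trans_le hβσ
  have hρ0 : 0 ≤ ρ := hρ ▸ add_nonneg hε.le (sdist_nonneg hx)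
  obtain ⟨e, he⟩ := exists_barrier_add_smul_sub_le hε ⟨hβ.le, hβσ.trans hσ⟩ hx hρ hρd
  refine ⟨e, fun s hs ↦ ?_⟩
  have hsq : β * (‖s‖ ^ 2 * Kker N σ a s) ≤ β / σ * radialMajorant (N + 2 * σ) σ ‖s‖ :=
    mul_le_mul (le_div_self hβ.le hσ0 hσ) (sq_norm_mul_Kker_le_radialMajorant ha hs)
      (mul_nonneg (sq_nonneg _) (Kker_nonneg ha)) (by positivity)
  calc (barrier N Ω ε β (x + ρ • s) - barrier N Ω ε β x) * Kker N σ a s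
      ≤ ρ ^ β * (β * (inner ℝ e s + ‖s‖ ^ 2)) * Kker N σ a s :=
        mul_le_mul_of_nonneg_right (he s) (Kker_nonneg ha)
    _ = ρ ^ β * (β * (‖s‖ ^ 2 * Kker N σ a s) + β * (inner ℝ e s * Kker N σ a s)) := by ring
    _ ≤ ρ ^ β * (β / σ * radialMajorant (N + 2 * σ) σ ‖s‖ + β * (inner ℝ e s * Kker N σ a s)) := by
        gcongr

-- When `d(x) < ε` the rescaled kernel is bounded and no first-order term is needed. Otherwise
-- `d(x)` is comparable to `ρ` and semiconcavity of the distance controls the singular region.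
lemma exists_barrier_increment_mul_Kker_le (hε : 0 < ε) (hβ : 0 < β) (hβσ : β ≤ σ) (hσ : σ ≤ 1)
    (hx : x ∈ closure Ω) (hρ : ρ = ε + sdist N Ω x) :
    ∃ e : EuclideanSpace ℝ (Fin N), ∀ s,
      (barrier N Ω ε β (x + ρ • s) - barrier N Ω ε β x) * Kker N σ (ε / ρ) s ≤
        ρ ^ β * (β / σ * radialMajorant (N + 2 * σ) σ ‖s‖ +
          β * (ball 0 (1 / 2)).indicator (fun s ↦ inner ℝ e s * Kker N σ (ε / ρ) s) s -
          {s | x + ρ • s ∉ closure Ω}.indicator (Kker N σ (ε / ρ)) s) := by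
  have hσ0 : 0 < σ := hβ.trans_le hβσ
  have hd : 0 ≤ sdist N Ω x := sdist_nonneg hx
  have hρ0 : 0 < ρ := by linarith
  have ha : 0 ≤ ε / ρ := by positivity
  have hfar (s) := barrier_increment_mul_Kker_le (s := s) ha hε hβ hβσ hσ hx hρ
  rcases lt_or_ge (2 * sdist N Ω x) ρ with hρd | hρd
  · have ha2 : 1 / 2 ≤ ε / ρ := by
      rw [div_le_div_iff₀ two_pos hρ0]
      linarith
    refine ⟨0, fun s ↦ (hfar s).trans ?_⟩
    simp only [inner_zero_left, zero_mul, indicator_zero, mul_zero, add_zero]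
    gcongr
    exact rpow_norm_mul_Kker_le_radialMajorant_of_half_le hσ0.le hσ0.le ha2
  · obtain ⟨e, he⟩ :=
      exists_barrier_increment_mul_Kker_le_of_norm_lt_half ha hε hβ hβσ hσ hx hρ hρd
    refine ⟨e, fun s ↦ ?_⟩
    rcases lt_or_ge ‖s‖ (1 / 2) with hs | hs
    · have hin : x + ρ • s ∈ closure Ω := add_smul_mem_closure hε hx hρ hρd hs
      rw [indicator_of_mem (by simpa using hs), indicator_of_notMem (by simpa using hin), sub_zero]
      exact he s hs
    · rw [indicator_of_notMem (by simpa using hs), mul_zero, add_zero]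
      refine (hfar s).trans ?_
      gcongr
      exact rpow_norm_mul_Kker_le_radialMajorant_of_half_le_norm ha hs

lemma integrable_barrier_increment_mul_Kker {a : ℝ} (ha : 0 < a) (hσ : 0 < σ) (hε : 0 ≤ ε)
    {g : EuclideanSpace ℝ (Fin N) → ℝ} (hg : Integrable g)
    (hle : ∀ s, (barrier N Ω ε β (x + ρ • s) - barrier N Ω ε β x) * Kker N σ a s ≤ g s) :
    Integrable fun s ↦ (barrier N Ω ε β (x + ρ • s) - barrier N Ω ε β x) * Kker N σ a s := by
  have hmeas : Measurable fun s ↦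
      (barrier N Ω ε β (x + ρ • s) - barrier N Ω ε β x) * Kker N σ a s :=
    ((measurable_barrier.comp (by fun_prop)).sub_const _).mul measurable_Kker
  have hlower : ∀ s, -barrier N Ω ε β x * Kker N σ a s ≤
      (barrier N Ω ε β (x + ρ • s) - barrier N Ω ε β x) * Kker N σ a s := fun s ↦
    mul_le_mul_of_nonneg_right ((neg_eq_zero_sub _).trans_le
      (sub_le_sub_right (barrier_nonneg hε) _)) (Kker_nonneg ha.le)
  exact integrable_of_le_of_le hmeas.aestronglyMeasurable (ae_of_all _ hlower) (ae_of_all _ hle)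
    ((integrable_Kker hσ ha).const_mul _) hg

lemma integral_barrier_increment_mul_Kker_le (hε : 0 < ε) (hβ : 0 < β) (hβσ : β ≤ σ) (hσ : σ < 1)
    (hΩ : (frontier Ω).Nonempty) (hx : x ∈ closure Ω) (hρ : ρ = ε + sdist N Ω x) :
    ∫ s, (barrier N Ω ε β (x + ρ • s) - barrier N Ω ε β x) * Kker N σ (ε / ρ) s ≤
      ρ ^ β * (β / σ * (∫ s : EuclideanSpace ℝ (Fin N), radialMajorant (N + 2 * σ) σ ‖s‖) -
        ∫ s in {s | x + ρ • s ∉ closure Ω}, Kker N σ (ε / ρ) s) := by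
  have : Nontrivial (EuclideanSpace ℝ (Fin N)) := nontrivial_of_frontier_nonempty hΩ
  have hσ0 : 0 < σ := hβ.trans_le hβσ
  have hρ0 : 0 < ρ := hρ ▸ add_pos_of_pos_of_nonneg hε (sdist_nonneg hx)
  have ha : 0 < ε / ρ := by positivity
  obtain ⟨e, hle⟩ := exists_barrier_increment_mul_Kker_le hε hβ hβσ hσ.le hx hρ
  have hext : MeasurableSet {s | x + ρ • s ∉ closure Ω} :=
    isClosed_closure.measurableSet.compl.preimage (by fun_prop : Measurable fun s ↦ x + ρ • s)
  have hK : Integrable ({s | x + ρ • s ∉ closure Ω}.indicator (Kker N σ (ε / ρ))) :=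
    (integrable_Kker hσ0 ha).indicator hext
  have hM : Integrable fun s : EuclideanSpace ℝ (Fin N) ↦
      β / σ * radialMajorant (N + 2 * σ) σ ‖s‖ :=
    (integrable_radialMajorant_norm volume (by simpa using hσ)
      (by rw [finrank_euclideanSpace_fin]; linarith)).const_mul _
  have hO : Integrable fun s ↦
      β * (ball 0 (1 / 2)).indicator (fun s ↦ inner ℝ e s * Kker N σ (ε / ρ) s) s :=
    (integrable_indicator_inner_mul_Kker hσ0 ha e (1 / 2)).const_mul β
  have hMO : Integrable fun s : EuclideanSpace ℝ (Fin N) ↦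
      β / σ * radialMajorant (N + 2 * σ) σ ‖s‖ +
        β * (ball 0 (1 / 2)).indicator (fun s ↦ inner ℝ e s * Kker N σ (ε / ρ) s) s := hM.add hO
  have hupper := (hMO.sub hK).const_mul (ρ ^ β)
  refine (integral_mono (integrable_barrier_increment_mul_Kker ha hσ0 hε.le hupper hle) hupper
    hle).trans_eq ?_
  simp only [Pi.sub_apply]
  rw [integral_const_mul, integral_sub hMO hK, integral_add hM hO, integral_const_mul,
    integral_const_mul, integral_indicator_inner_mul_Kker, mul_zero, add_zero,
    integral_indicator hext]

lemma rpow_mul_le_neg_Iop_barrier (hε : 0 < ε) (hβ : 0 < β) (hβσ : β ≤ σ) (hσ : σ < 1)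
    (hΩ : (frontier Ω).Nonempty) (hx : x ∈ closure Ω) (hρ : ρ = ε + sdist N Ω x) :
    ρ ^ (β - 2 * σ) * ((∫ s in {s | x + ρ • s ∉ closure Ω}, Kker N σ (ε / ρ) s) -
      β / σ * ∫ s : EuclideanSpace ℝ (Fin N), radialMajorant (N + 2 * σ) σ ‖s‖) ≤
        -Iop N σ ε (barrier N Ω ε β) x := by
  have hρ0 : 0 < ρ := hρ ▸ add_pos_of_pos_of_nonneg hε (sdist_nonneg hx)
  rw [Iop_eq_rpow_mul_integral hε hρ0, ← mul_neg, sub_eq_neg_add β, Real.rpow_add hρ0, mul_assoc]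
  gcongr
  linarith [integral_barrier_increment_mul_Kker_le hε hβ hβσ hσ hΩ hx hρ]

lemma mul_volume_ball_le_setIntegral_Kker_exterior {a R θ : ℝ} (hσ : 0 < σ) (ha : a ∈ Ioc 0 1)
    (hρ : 0 < ρ) {w : EuclideanSpace ℝ (Fin N)} (hw : w ∈ closedBall x (R * ρ))
    (hwΩ : Disjoint (ball w (θ * ρ)) Ω) :
    1 / (1 + (R + θ) ^ (N + 2 * σ)) * volume.real (ball (0 : EuclideanSpace ℝ (Fin N)) θ) ≤
      ∫ s in {s | x + ρ • s ∉ closure Ω}, Kker N σ a s := by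
  refine mul_volume_ball_le_setIntegral_Kker hσ ha (s := ρ⁻¹ • (w - x)) ?_ fun s hs ↦ ?_
  · rw [norm_smul, norm_inv, Real.norm_of_nonneg hρ.le, inv_mul_le_iff₀ hρ, mul_comm,
      ← dist_eq_norm]
    exact hw
  · refine disjoint_left.1 (hwΩ.closure_right isOpen_ball) ?_
    have hsub : x + ρ • s - w = ρ • (s - ρ⁻¹ • (w - x)) := by
      rw [smul_sub, smul_inv_smul₀ hρ.ne']
      abel
    rw [mem_ball, dist_eq_norm, hsub, norm_smul, Real.norm_of_nonneg hρ.le, mul_comm]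
    gcongr
    exact mem_ball_iff_norm.1 hs

lemma exists_mul_rpow_le_neg_Iop_barrier (N : ℕ) {σ θ : ℝ} (hσ : σ ∈ Ioo (0 : ℝ) 1) (hθ : 0 < θ) :
    ∃ β₀ ∈ Ioc 0 σ, ∃ c > 0, ∀ (Ω : Set (EuclideanSpace ℝ (Fin N))) (x w) (ε β : ℝ),
      (frontier Ω).Nonempty → x ∈ closure Ω → 0 < ε → β ∈ Ioc 0 β₀ →
      w ∈ closedBall x (2 * (ε + sdist N Ω x)) →
      Disjoint (ball w (θ * (ε + sdist N Ω x))) Ω →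
      c * (ε + sdist N Ω x) ^ (β - 2 * σ) ≤ -Iop N σ ε (barrier N Ω ε β) x := by
  obtain ⟨hσ0, hσ1⟩ := hσ
  set M := ∫ s : EuclideanSpace ℝ (Fin N), radialMajorant (N + 2 * σ) σ ‖s‖
  set m := 1 / (1 + (2 + θ) ^ (N + 2 * σ)) * volume.real (ball (0 : EuclideanSpace ℝ (Fin N)) θ)
  have hM : 0 ≤ M := integral_nonneg fun s ↦ radialMajorant_nonneg (norm_nonneg s)
  have hm : 0 < m :=
    mul_pos (by positivity)
      (ENNReal.toReal_pos (measure_ball_pos _ _ hθ).ne' measure_ball_lt_top.ne)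
  refine ⟨min σ (σ * (m / (2 * (M + 1)))), ⟨lt_min hσ0 (by positivity), min_le_left _ _⟩, m / 2,
    half_pos hm, fun Ω x w ε β hΩ hx hε hβ hw hwΩ ↦ ?_⟩
  have hd : 0 ≤ sdist N Ω x := sdist_nonneg hx
  have hβM : β / σ * M ≤ m / 2 :=
    calc β / σ * M ≤ m / (2 * (M + 1)) * (M + 1) :=
          mul_le_mul ((div_le_iff₀' hσ0).2 (hβ.2.trans (min_le_right _ _))) (le_add_of_nonneg_right
            zero_le_one) hM (by positivity)
      _ = m / 2 := by field_simp
  have hmass := mul_volume_ball_le_setIntegral_Kker_exterior (a := ε / (ε + sdist N Ω x)) hσ0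
    ⟨by positivity, div_le_one_of_le₀ (by linarith) (by positivity)⟩ (by positivity) hw hwΩ
  refine le_trans ?_ (rpow_mul_le_neg_Iop_barrier hε hβ.1 (hβ.2.trans (min_le_left _ _)) hσ1 hΩ hx
    rfl)
  rw [mul_comm]
  gcongr
  linarith

end Barrier

theorem statement2_general (N : ℕ) (σ : ℝ) (hσ : σ ∈ Ioo (0 : ℝ) 1)
    (Ω : Set (EuclideanSpace ℝ (Fin N))) (hΩ : (frontier Ω).Nonempty) (δ₀ : ℝ) (hδ₀ : 0 < δ₀)
    (θ : ℝ) (hθ : 0 < θ) (hcork : HasExteriorCorkscrew Ω θ) :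
    ∃ δbar ∈ Ioo (0 : ℝ) δ₀, ∃ β₀ ∈ Ioo (0 : ℝ) (min 1 (2 * σ)), ∃ cstar > (0 : ℝ),
      ∀ β ∈ Ioc (0 : ℝ) β₀, ∀ ε ∈ Ioo (0 : ℝ) δbar,
        ∀ x ∈ closure {x | x ∈ Ω ∧ sdist N Ω x < δbar},
          cstar * (ε + sdist N Ω x) ^ (β - 2 * σ) ≤ -Iop N σ ε (barrier N Ω ε β) x := by
  obtain ⟨r, hr0 : 0 < r, hr⟩ := mem_nhdsGT_iff_exists_Ioc_subset.1 hcork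
  obtain ⟨β₀, hβ₀, c, hc, hbarrier⟩ := exists_mul_rpow_le_neg_Iop_barrier N hσ hθ
  refine ⟨min (δ₀ / 2) (r / 2), ⟨by positivity, (min_le_left _ _).trans_lt (half_lt_self hδ₀)⟩,
    β₀, ⟨hβ₀.1, hβ₀.2.trans_lt (lt_min hσ.2 (by linarith [hσ.1]))⟩, c, hc,
    fun β hβ ε hε x hx ↦ ?_⟩
  obtain ⟨hxΩ, hxδ⟩ := mem_closure_and_sdist_le_of_mem_closure hx
  have hd : 0 ≤ sdist N Ω x := sdist_nonneg hxΩ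
  have hρ : ε + sdist N Ω x ∈ Ioc 0 r :=
    ⟨add_pos_of_pos_of_nonneg hε.1 hd, by linarith [hε.2, min_le_right (δ₀ / 2) (r / 2)]⟩
  obtain ⟨w, hw, hwΩ⟩ := exists_mem_closedBall_two_mul_disjoint (hr hρ) hΩ
    (x := x) (by rw [← sdist_of_mem_closure hxΩ]; linarith [hε.1])
  exact hbarrier Ω x w ε β hΩ hxΩ hε.1 hβ hw hwΩ

/-- key lemma: the barrier `ψ_β(x) = (ε + d(x))^β 1_{Ω̄}(x)` satisfies
`-I_ε[ψ_β](x) ≥ c* (ε + d(x))^{β-2σ}` near the boundary. -/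
theorem statement2 (N : ℕ) (hN : 1 ≤ N) (σ : ℝ) (hσ : σ ∈ Set.Ioo (0 : ℝ) 1)
    (Ω : Set (EuclideanSpace ℝ (Fin N))) (hΩo : IsOpen Ω) (hΩb : Bornology.IsBounded Ω)
    (δ₀ : ℝ) (hC2 : HasC2Boundary N Ω δ₀) :
    ∃ δbar ∈ Set.Ioo (0 : ℝ) δ₀, ∃ β₀ ∈ Set.Ioo (0 : ℝ) (min 1 (2 * σ)), ∃ cstar > (0 : ℝ),
      ∀ β ∈ Set.Ioc (0 : ℝ) β₀, ∀ ε ∈ Set.Ioo (0 : ℝ) δbar,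
        ∀ x ∈ closure {x | x ∈ Ω ∧ sdist N Ω x < δbar},
          cstar * (ε + sdist N Ω x) ^ (β - 2 * σ) ≤
            -Iop N σ ε
              (fun x' => if x' ∈ closure Ω then (ε + sdist N Ω x') ^ β else 0) x := by
  exact statement2_general N σ hσ Ω hC2.1 δ₀ hC2.2.1 (1 / 2) one_half_pos
    (hC2.hasExteriorCorkscrew hΩo hΩb ⟨one_half_pos, one_half_lt_one⟩)
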